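/- Assume λ, μ ∈ ℂ \ ℤ. Then F(λ/z, μ/z) is irreducible: the only ℂ-subspaces of F invariant under all operators G⁺(i−1/2) = (λ−i)Ψ⁺(i−1/2) and G⁻(i−1/2) = (μ−i)Ψ⁻(i−1/2), i ∈ ℤ, are {0} and F. -/

import Mathlib

noncomputable section

/-- The fermionic Fock space `F`: it has basis indexed by pairs `(A, B)` of finite sets of
nonnegative integers, the pair `(A, B)` corresponding to the basis monomial
`Ψ⁺(−n₁−1/2)⋯Ψ⁺(−n_r−1/2)·Ψ⁻(−k₁−1/2)⋯Ψ⁻(−k_s−1/2)·𝟙` where `A = {n₁ > ⋯ > n_r}` and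
`B = {k₁ > ⋯ > k_s}`. -/
abbrev FockF : Type := (Finset ℕ × Finset ℕ) →₀ ℂ

/-- The vacuum vector `𝟙`. -/
def vac : FockF := Finsupp.single (∅, ∅) 1

/-- `(−1)^{#{a ∈ S : a > m}}`. -/
def sgn (S : Finset ℕ) (m : ℕ) : ℂ := (-1 : ℂ) ^ (S.filter fun a => m < a).card

/-- `Ψ⁺(−m−1/2)`: exterior multiplication (creation). -/
def psiPneg (m : ℕ) : Module.End ℂ FockF :=
  Finsupp.lsum ℂ fun AB : Finset ℕ × Finset ℕ => LinearMap.toSpanSingleton ℂ FockF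
    (if m ∈ AB.1 then 0 else sgn AB.1 m • Finsupp.single (insert m AB.1, AB.2) 1)

/-- `Ψ⁺(m+1/2)`: the odd contraction operator pairing with `Ψ⁻(−m−1/2)` (annihilation). -/
def psiPpos (m : ℕ) : Module.End ℂ FockF :=
  Finsupp.lsum ℂ fun AB : Finset ℕ × Finset ℕ => LinearMap.toSpanSingleton ℂ FockF
    (if m ∈ AB.2 then ((-1 : ℂ) ^ AB.1.card * sgn AB.2 m) • Finsupp.single (AB.1, AB.2.erase m) 1
     else 0)

/-- `Ψ⁻(−m−1/2)`: exterior multiplication (creation). -/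
def psiMneg (m : ℕ) : Module.End ℂ FockF :=
  Finsupp.lsum ℂ fun AB : Finset ℕ × Finset ℕ => LinearMap.toSpanSingleton ℂ FockF
    (if m ∈ AB.2 then 0
     else ((-1 : ℂ) ^ AB.1.card * sgn AB.2 m) • Finsupp.single (AB.1, insert m AB.2) 1)

/-- `Ψ⁻(m+1/2)`: the odd contraction operator pairing with `Ψ⁺(−m−1/2)` (annihilation). -/
def psiMpos (m : ℕ) : Module.End ℂ FockF :=
  Finsupp.lsum ℂ fun AB : Finset ℕ × Finset ℕ => LinearMap.toSpanSingleton ℂ FockF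
    (if m ∈ AB.1 then sgn AB.1 m • Finsupp.single (AB.1.erase m, AB.2) 1 else 0)

/-- `PsiP i` is the operator `Ψ⁺(i − 1/2)`, `i ∈ ℤ`. -/
def PsiP (i : ℤ) : Module.End ℂ FockF :=
  if i ≤ 0 then psiPneg (-i).toNat else psiPpos (i - 1).toNat

/-- `PsiM i` is the operator `Ψ⁻(i − 1/2)`, `i ∈ ℤ`. -/
def PsiM (i : ℤ) : Module.End ℂ FockF :=
  if i ≤ 0 then psiMneg (-i).toNat else psiMpos (i - 1).toNat

/-- `G⁺(i−1/2) = (λ − i)·Ψ⁺(i−1/2)`. -/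
def Gplus (lam : ℂ) (i : ℤ) : Module.End ℂ FockF := (lam - (i : ℂ)) • PsiP i

/-- The finite set of indices `k ≥ −p` for which `Ψ⁻(k+i−1/2)` can act nontrivially on the
basis monomial `AB`; outside of it all terms of the locally finite sum defining `G⁻` vanish. -/
def GminusIdx (p : ℕ) (i : ℤ) (AB : Finset ℕ × Finset ℕ) : Finset ℤ :=
  (Finset.Icc (-(p : ℤ)) (-i) ∪ AB.1.image fun a : ℕ => (a : ℤ) + 1 - i).filter
    fun k => -(p : ℤ) ≤ k

/-- `G⁻(i−1/2) = −i·Ψ⁻(i−1/2) + Σ_{k=−p}^∞ χ_{−k}·Ψ⁻(k+i−1/2)` (a locally finite sum). -/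
def Gminus (p : ℕ) (χ : ℤ → ℂ) (i : ℤ) : Module.End ℂ FockF :=
  (-(i : ℂ)) • PsiM i +
    Finsupp.lsum ℂ fun AB : Finset ℕ × Finset ℕ => LinearMap.toSpanSingleton ℂ FockF
      (∑ k ∈ GminusIdx p i AB, χ (-k) • PsiM (k + i) (Finsupp.single AB 1))

end


lemma sgn_mul_self_aux (S : Finset ℕ) (m : ℕ) : sgn S m * sgn S m = 1 := by
  unfold sgn
  rw [← mul_pow]; simp

lemma sgn_ne_aux (S : Finset ℕ) (m : ℕ) : sgn S m ≠ 0 := by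
  unfold sgn; simp

lemma sgn_erase_aux (S : Finset ℕ) (m : ℕ) : sgn (S.erase m) m = sgn S m := by
  unfold sgn
  congr 2
  ext a
  simp only [Finset.mem_filter, Finset.mem_erase]
  constructor
  · rintro ⟨⟨_, h⟩, hlt⟩; exact ⟨h, hlt⟩
  · rintro ⟨h, hlt⟩; exact ⟨⟨by omega, h⟩, hlt⟩

lemma psiPneg_single (m : ℕ) (A B : Finset ℕ) (c : ℂ) :
    psiPneg m (Finsupp.single (A, B) c) =
      if m ∈ A then 0 else (c * sgn A m) • Finsupp.single (insert m A, B) 1 := by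
  simp only [psiPneg, Finsupp.lsum_single, LinearMap.toSpanSingleton_apply]
  split_ifs <;> simp only [smul_smul, smul_zero]

lemma psiPpos_single (m : ℕ) (A B : Finset ℕ) (c : ℂ) :
    psiPpos m (Finsupp.single (A, B) c) =
      if m ∈ B then (c * ((-1 : ℂ) ^ A.card * sgn B m)) • Finsupp.single (A, B.erase m) 1
      else 0 := by
  simp only [psiPpos, Finsupp.lsum_single, LinearMap.toSpanSingleton_apply]
  split_ifs <;> simp only [smul_smul, smul_zero]

lemma psiMneg_single (m : ℕ) (A B : Finset ℕ) (c : ℂ) :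
    psiMneg m (Finsupp.single (A, B) c) =
      if m ∈ B then 0
      else (c * ((-1 : ℂ) ^ A.card * sgn B m)) • Finsupp.single (A, insert m B) 1 := by
  simp only [psiMneg, Finsupp.lsum_single, LinearMap.toSpanSingleton_apply]
  split_ifs <;> simp only [smul_smul, smul_zero]

lemma psiMpos_single (m : ℕ) (A B : Finset ℕ) (c : ℂ) :
    psiMpos m (Finsupp.single (A, B) c) =
      if m ∈ A then (c * sgn A m) • Finsupp.single (A.erase m, B) 1 else 0 := by
  simp only [psiMpos, Finsupp.lsum_single, LinearMap.toSpanSingleton_apply]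
  split_ifs <;> simp only [smul_smul, smul_zero]

lemma proj_fst (m : ℕ) (v : FockF) :
    psiPneg m (psiMpos m v) = Finsupp.filter (fun AB => m ∈ AB.1) v := by
  induction v using Finsupp.induction_linear with
  | zero => rw [map_zero, map_zero, Finsupp.filter_zero]
  | add f g hf hg => rw [map_add, map_add, hf, hg, Finsupp.filter_add]
  | single AB c =>
    obtain ⟨A, B⟩ := AB
    rw [psiMpos_single]
    by_cases h : m ∈ A
    · rw [if_pos h, map_smul, psiPneg_single, if_neg (by simp), Finset.insert_erase h,
        sgn_erase_aux, smul_smul, Finsupp.filter_single_of_pos (p := fun AB : Finset ℕ × Finset ℕ => m ∈ AB.1) (a := (A, B)) h, one_mul, mul_assoc,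
        sgn_mul_self_aux]
      simp
    · rw [if_neg h, map_zero, Finsupp.filter_single_of_neg (p := fun AB : Finset ℕ × Finset ℕ => m ∈ AB.1) (a := (A, B)) h]

lemma proj_snd (m : ℕ) (v : FockF) :
    psiMneg m (psiPpos m v) = Finsupp.filter (fun AB => m ∈ AB.2) v := by
  induction v using Finsupp.induction_linear with
  | zero => rw [map_zero, map_zero, Finsupp.filter_zero]
  | add f g hf hg => rw [map_add, map_add, hf, hg, Finsupp.filter_add]
  | single AB c =>
    obtain ⟨A, B⟩ := AB
    rw [psiPpos_single]
    by_cases h : m ∈ B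
    · have h1 : ((-1 : ℂ) ^ A.card * sgn B m) * ((-1 : ℂ) ^ A.card * sgn B m) = 1 := by
        rw [mul_mul_mul_comm, sgn_mul_self_aux, ← mul_pow]; simp
      rw [if_pos h, map_smul, psiMneg_single, if_neg (by simp), Finset.insert_erase h,
        sgn_erase_aux, smul_smul, Finsupp.filter_single_of_pos (p := fun AB : Finset ℕ × Finset ℕ => m ∈ AB.2) (a := (A, B)) h, one_mul, mul_assoc, h1]
      simp
    · rw [if_neg h, map_zero, Finsupp.filter_single_of_neg (p := fun AB : Finset ℕ × Finset ℕ => m ∈ AB.2) (a := (A, B)) h]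

/-- A subspace closed under the projections that separate basis vectors contains a basis vector. -/
lemma exists_single (U : Submodule ℂ FockF)
    (h1 : ∀ m, ∀ v ∈ U, Finsupp.filter (fun AB : Finset ℕ × Finset ℕ => m ∈ AB.1) v ∈ U)
    (h2 : ∀ m, ∀ v ∈ U, Finsupp.filter (fun AB : Finset ℕ × Finset ℕ => m ∈ AB.2) v ∈ U)
    (n : ℕ) : ∀ v ∈ U, v ≠ 0 → v.support.card ≤ n →
      ∃ A B, (Finsupp.single (A, B) 1 : FockF) ∈ U := by
  induction n with
  | zero =>
    intro v _ h0 hn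
    exact absurd (Finsupp.support_eq_empty.1 (Finset.card_eq_zero.1 (by omega))) h0
  | succ n ih =>
    intro v hv h0 hn
    -- a separating predicate yields a smaller vector
    have key : ∀ (p : Finset ℕ × Finset ℕ → Prop) [DecidablePred p], Finsupp.filter p v ∈ U →
        ∀ x ∈ v.support, ∀ y ∈ v.support, p x → ¬ p y →
        ∃ A B, (Finsupp.single (A, B) 1 : FockF) ∈ U := by
      intro p _ hp x hx y hy px py
      refine ih _ hp ?_ ?_
      · intro h
        have := DFunLike.congr_fun h x
        rw [Finsupp.filter_apply_pos _ _ px] at this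
        exact (Finsupp.mem_support_iff.1 hx) this
      · have : (Finsupp.filter p v).support ⊂ v.support := by
          rw [Finsupp.support_filter, Finset.filter_ssubset]
          exact ⟨y, hy, py⟩
        have := Finset.card_lt_card this
        omega
    by_cases hs : ∃ x ∈ v.support, ∃ y ∈ v.support, x ≠ y
    · obtain ⟨x, hx, y, hy, hxy⟩ := hs
      by_cases hf : x.1 = y.1
      · have hne : x.2 ≠ y.2 := fun h => hxy (Prod.ext hf h)
        have : ∃ m, ¬ (m ∈ x.2 ↔ m ∈ y.2) := by
          by_contra! h
          exact hne (Finset.ext h)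
        obtain ⟨m, hm⟩ := this
        by_cases hmx : m ∈ x.2
        · exact key _ (h2 m v hv) x hx y hy hmx (by tauto)
        · exact key _ (h2 m v hv) y hy x hx (by tauto) hmx
      · have : ∃ m, ¬ (m ∈ x.1 ↔ m ∈ y.1) := by
          by_contra! h
          exact hf (Finset.ext h)
        obtain ⟨m, hm⟩ := this
        by_cases hmx : m ∈ x.1
        · exact key _ (h1 m v hv) x hx y hy hmx (by tauto)
        · exact key _ (h1 m v hv) y hy x hx (by tauto) hmx
    · push Not at hs
      obtain ⟨⟨A, B⟩, hx⟩ := Finsupp.support_nonempty_iff.2 h0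
      refine ⟨A, B, ?_⟩
      have hveq : v = Finsupp.single (A, B) (v (A, B)) := by
        ext z
        by_cases hz : z = (A, B)
        · subst hz; simp
        · rw [Finsupp.single_eq_of_ne hz]
          by_contra h
          exact hz (hs z (Finsupp.mem_support_iff.2 h) _ hx)
      have h3 := U.smul_mem (v (A, B))⁻¹ hv
      rw [hveq, Finsupp.smul_single] at h3
      simpa [inv_mul_cancel₀ (Finsupp.mem_support_iff.1 hx)] using h3

/-- If `λ, μ ∈ ℂ \ ℤ` then `F(λ/z, μ/z)` is irreducible: the only
`ℂ`-subspaces of `F` invariant under all the operators `G⁺(i−1/2) = (λ−i)Ψ⁺(i−1/2)` and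
`G⁻(i−1/2) = (μ−i)Ψ⁻(i−1/2)`, `i ∈ ℤ`, are `{0}` and `F`. -/
theorem statement4 (lam mu : ℂ) (hlam : ∀ n : ℤ, lam ≠ (n : ℂ)) (hmu : ∀ n : ℤ, mu ≠ (n : ℂ))
    (U : Submodule ℂ FockF)
    (hU : ∀ i : ℤ, ∀ v ∈ U,
      ((lam - (i : ℂ)) • PsiP i) v ∈ U ∧ ((mu - (i : ℂ)) • PsiM i) v ∈ U) :
    U = ⊥ ∨ U = ⊤ := by
  have hP : ∀ i : ℤ, ∀ v ∈ U, PsiP i v ∈ U := fun i v hv =>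
    (U.smul_mem_iff (sub_ne_zero.2 (hlam i))).1 (hU i v hv).1
  have hM : ∀ i : ℤ, ∀ v ∈ U, PsiM i v ∈ U := fun i v hv =>
    (U.smul_mem_iff (sub_ne_zero.2 (hmu i))).1 (hU i v hv).2
  have hPn : ∀ m : ℕ, ∀ v ∈ U, psiPneg m v ∈ U := fun m v hv => by
    simpa [PsiP] using hP (-(m : ℤ)) v hv
  have hMn : ∀ m : ℕ, ∀ v ∈ U, psiMneg m v ∈ U := fun m v hv => by
    simpa [PsiM] using hM (-(m : ℤ)) v hv
  have hPp : ∀ m : ℕ, ∀ v ∈ U, psiPpos m v ∈ U := fun m v hv => by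
    have := hP ((m : ℤ) + 1) v hv
    rw [PsiP, if_neg (by omega)] at this
    simpa using this
  have hMp : ∀ m : ℕ, ∀ v ∈ U, psiMpos m v ∈ U := fun m v hv => by
    have := hM ((m : ℤ) + 1) v hv
    rw [PsiM, if_neg (by omega)] at this
    simpa using this
  by_cases hbot : U = ⊥
  · exact Or.inl hbot
  right
  obtain ⟨v, hv, hv0⟩ := U.ne_bot_iff.1 hbot
  obtain ⟨A, B, hAB⟩ := exists_single U
    (fun m w hw => by rw [← proj_fst]; exact hPn m _ (hMp m _ hw))
    (fun m w hw => by rw [← proj_snd]; exact hMn m _ (hPp m _ hw))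
    _ v hv hv0 le_rfl
  have hsg : ∀ (S T : Finset ℕ) (m : ℕ), (1 : ℂ) * ((-1 : ℂ) ^ S.card * sgn T m) ≠ 0 :=
    fun S T m => by simp [sgn_ne_aux]
  have hsgone : ∀ (T : Finset ℕ) (m : ℕ), (1 : ℂ) * sgn T m ≠ 0 :=
    fun T m => by simp [sgn_ne_aux]
  -- annihilate down to the vacuum
  have hA : ∀ (A B : Finset ℕ), (Finsupp.single (A, B) 1 : FockF) ∈ U →
      (Finsupp.single (∅, B) 1 : FockF) ∈ U := by
    intro A B
    induction A using Finset.induction_on with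
    | empty => exact id
    | insert m S hm ih =>
      intro h
      apply ih
      have := hMp m _ h
      rw [psiMpos_single, if_pos (Finset.mem_insert_self _ _), Finset.erase_insert hm] at this
      exact (U.smul_mem_iff (hsgone _ _)).1 this
  have hB : ∀ (A B : Finset ℕ), (Finsupp.single (A, B) 1 : FockF) ∈ U →
      (Finsupp.single (A, ∅) 1 : FockF) ∈ U := by
    intro A B
    induction B using Finset.induction_on with
    | empty => exact id
    | insert m S hm ih =>
      intro h
      apply ih
      have := hPp m _ h
      rw [psiPpos_single, if_pos (Finset.mem_insert_self _ _), Finset.erase_insert hm] at this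
      exact (U.smul_mem_iff (hsg _ _ _)).1 this
  have hvac : (Finsupp.single (∅, ∅) 1 : FockF) ∈ U := hB _ _ (hA _ _ hAB)
  -- create every basis vector
  have hC : ∀ A : Finset ℕ, (Finsupp.single (A, ∅) 1 : FockF) ∈ U := by
    intro A
    induction A using Finset.induction_on with
    | empty => exact hvac
    | insert m S hm ih =>
      have := hPn m _ ih
      rw [psiPneg_single, if_neg hm] at this
      exact (U.smul_mem_iff (hsgone _ _)).1 this
  have hD : ∀ A B : Finset ℕ, (Finsupp.single (A, B) 1 : FockF) ∈ U := by
    intro A B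
    induction B using Finset.induction_on with
    | empty => exact hC A
    | insert m S hm ih =>
      have := hMn m _ ih
      rw [psiMneg_single, if_neg hm] at this
      exact (U.smul_mem_iff (hsg _ _ _)).1 this
  rw [eq_top_iff]
  intro w _
  induction w using Finsupp.induction_linear with
  | zero => exact U.zero_mem
  | add f g hf hg => exact U.add_mem (hf trivial) (hg trivial)
  | single AB c =>
    have := U.smul_mem c (hD AB.1 AB.2)
    simpa [Finsupp.smul_single] using this
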